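/- arXiv:2411.01577 — 3 statements merged into one kernel-verified Lean document; each statement's English description precedes it below -/
import Mathlib

section
/- Let n ≥ 1 and 0 < β < α ≤ n. For a measurable function F : ℝⁿ → [0,∞) and s ∈ (0,n], define M_s F := ( sup_H A_s(H)^{−1} ∫_{ℝⁿ} F(x)^s H(x) dx )^{1/s}, where the supremum is over all s-dimensional weights H on ℝⁿ with A_s(H) > 0. Then M_α F ≤ M_β F for every nonnegative measurable F on ℝⁿ. -/
open MeasureTheory Metric Set
open scoped ENNReal

noncomputable section

/-- The best constant `A_s(H)` in the `s`-dimensional Frostman condition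
`∫_{B(x₀,R)} H ≤ C R^s` (for all `x₀` and all `R ≥ 1`). -/
def Aconst {n : ℕ} (s : ℝ) (H : EuclideanSpace ℝ (Fin n) → ℝ) : ℝ :=
  sInf {C : ℝ | 0 ≤ C ∧ ∀ x₀ : EuclideanSpace ℝ (Fin n), ∀ R : ℝ, 1 ≤ R →
    (∫ x in Metric.ball x₀ R, H x) ≤ C * R ^ s}

/-- `H : ℝⁿ → [0,1]` is an `s`-dimensional weight: it is measurable and satisfies
the Frostman condition with some finite constant. -/
def IsDimWeight {n : ℕ} (s : ℝ) (H : EuclideanSpace ℝ (Fin n) → ℝ) : Prop :=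
  Measurable H ∧ (∀ x, H x ∈ Set.Icc (0 : ℝ) 1) ∧
    ∃ C : ℝ, 0 ≤ C ∧ ∀ x₀ : EuclideanSpace ℝ (Fin n), ∀ R : ℝ, 1 ≤ R →
      (∫ x in Metric.ball x₀ R, H x) ≤ C * R ^ s

/-- The quantity `M_s F = ( sup_H A_s(H)⁻¹ ∫ F^s H dx )^{1/s}`, the supremum being
over all `s`-dimensional weights `H` with `A_s(H) > 0`. -/
def Msup {n : ℕ} (s : ℝ) (F : EuclideanSpace ℝ (Fin n) → ℝ) : ℝ≥0∞ :=
  (⨆ H : {H : EuclideanSpace ℝ (Fin n) → ℝ // IsDimWeight s H ∧ 0 < Aconst s H},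
      (ENNReal.ofReal (Aconst s H.1))⁻¹ *
        ∫⁻ x, ENNReal.ofReal (F x ^ s * H.1 x)) ^ (1 / s)

lemma setInt_iff {n : ℕ} (H : EuclideanSpace ℝ (Fin n) → ℝ) (hm : Measurable H)
    (h01 : ∀ x, H x ∈ Set.Icc (0 : ℝ) 1) (x₀ : EuclideanSpace ℝ (Fin n)) (R c : ℝ) (hc : 0 ≤ c) :
    (∫ x in Metric.ball x₀ R, H x) ≤ c ↔
      (∫⁻ x in Metric.ball x₀ R, ENNReal.ofReal (H x)) ≤ ENNReal.ofReal c := by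
  have hfin : (∫⁻ x in Metric.ball x₀ R, ENNReal.ofReal (H x)) ≠ ⊤ := by
    have : (∫⁻ x in Metric.ball x₀ R, ENNReal.ofReal (H x)) ≤
        ∫⁻ x in Metric.ball x₀ R, 1 := by
      apply lintegral_mono
      intro x
      simpa using (h01 x).2
    refine ne_top_of_le_ne_top ?_ this
    simpa using (measure_ball_lt_top (μ := volume) (x := x₀) (r := R)).ne
  rw [integral_eq_lintegral_of_nonneg_ae (Filter.Eventually.of_forall fun x => (h01 x).1)
    hm.aestronglyMeasurable]
  exact (ENNReal.le_ofReal_iff_toReal_le hfin hc).symm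

lemma Aconst_spec {n : ℕ} (s : ℝ) (H : EuclideanSpace ℝ (Fin n) → ℝ) (h : IsDimWeight s H)
    (x₀ : EuclideanSpace ℝ (Fin n)) (R : ℝ) (hR : 1 ≤ R) :
    (∫ x in Metric.ball x₀ R, H x) ≤ Aconst s H * R ^ s := by
  have hp : 0 < R ^ s := Real.rpow_pos_of_pos (by linarith) s
  rw [← div_le_iff₀ hp]
  obtain ⟨_, _, C, hC⟩ := h
  refine le_csInf ⟨C, hC⟩ ?_
  rintro D ⟨_, hD⟩
  rw [div_le_iff₀ hp]
  exact hD x₀ R hR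

def Sq {n : ℕ} (s : ℝ) (F : EuclideanSpace ℝ (Fin n) → ℝ) : ℝ≥0∞ :=
  ⨆ H : {H : EuclideanSpace ℝ (Fin n) → ℝ // IsDimWeight s H ∧ 0 < Aconst s H},
      (ENNReal.ofReal (Aconst s H.1))⁻¹ *
        ∫⁻ x, ENNReal.ofReal (F x ^ s * H.1 x)

lemma key1 {n : ℕ} (s : ℝ) (F H : EuclideanSpace ℝ (Fin n) → ℝ)
    (hm : Measurable H) (h01 : ∀ x, H x ∈ Set.Icc (0 : ℝ) 1) (C : ℝ) (hC : 0 ≤ C)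
    (hb : ∀ x₀ : EuclideanSpace ℝ (Fin n), ∀ R : ℝ, 1 ≤ R →
      (∫ x in Metric.ball x₀ R, H x) ≤ C * R ^ s) :
    ∫⁻ x, ENNReal.ofReal (F x ^ s * H x) ≤ ENNReal.ofReal C * Sq s F := by
  have hw : IsDimWeight s H := ⟨hm, h01, C, hC, hb⟩
  have hAC : Aconst s H ≤ C := csInf_le ⟨0, fun D hD => hD.1⟩ ⟨hC, hb⟩
  rcases le_or_gt (Aconst s H) 0 with h0 | h0
  · have hz : ∀ k : ℕ, ∀ᵐ x ∂(volume.restrict (Metric.ball (0 : EuclideanSpace ℝ (Fin n)) (k+1))),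
        ENNReal.ofReal (H x) = 0 := by
      intro k
      have hk : (1 : ℝ) ≤ (k : ℝ) + 1 := by
        have : (0:ℝ) ≤ k := Nat.cast_nonneg k
        linarith
      have h1 := Aconst_spec s H hw 0 ((k : ℝ) + 1) hk
      have h2 : (∫ x in Metric.ball (0 : EuclideanSpace ℝ (Fin n)) ((k:ℝ)+1), H x) ≤ 0 :=
        h1.trans (mul_nonpos_of_nonpos_of_nonneg h0 (Real.rpow_nonneg (by linarith) s))
      rw [setInt_iff H hm h01 _ _ _ le_rfl] at h2
      have h3 : (∫⁻ x in Metric.ball (0 : EuclideanSpace ℝ (Fin n)) ((k:ℝ)+1),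
        ENNReal.ofReal (H x)) = 0 := by simpa using h2
      exact (lintegral_eq_zero_iff hm.ennreal_ofReal).1 h3
    have hz2 : ∀ᵐ x : EuclideanSpace ℝ (Fin n), ENNReal.ofReal (H x) = 0 := by
      have h3 : ∀ᵐ x : EuclideanSpace ℝ (Fin n), ∀ k : ℕ,
          x ∈ Metric.ball (0 : EuclideanSpace ℝ (Fin n)) (k+1) → ENNReal.ofReal (H x) = 0 :=
        ae_all_iff.2 fun k => (ae_restrict_iff' measurableSet_ball).1 (hz k)
      filter_upwards [h3] with x hx
      obtain ⟨k, hk⟩ := exists_nat_gt ‖x‖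
      exact hx k (by rw [mem_ball_zero_iff]; linarith)
    have : ∫⁻ x, ENNReal.ofReal (F x ^ s * H x) = ∫⁻ x : EuclideanSpace ℝ (Fin n), 0 := by
      apply lintegral_congr_ae
      filter_upwards [hz2] with x hx
      rw [ENNReal.ofReal_mul' (h01 x).1, hx, mul_zero]
    rw [this]; simp
  · have h1 : (ENNReal.ofReal (Aconst s H))⁻¹ *
        ∫⁻ x, ENNReal.ofReal (F x ^ s * H x) ≤ Sq s F :=
      le_iSup (fun H : {H : EuclideanSpace ℝ (Fin n) → ℝ // IsDimWeight s H ∧ 0 < Aconst s H} =>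
        (ENNReal.ofReal (Aconst s H.1))⁻¹ *
        ∫⁻ x, ENNReal.ofReal (F x ^ s * H.1 x)) ⟨H, hw, h0⟩
    have hne : ENNReal.ofReal (Aconst s H) ≠ 0 := by simpa using h0
    calc _ = ENNReal.ofReal (Aconst s H) * ((ENNReal.ofReal (Aconst s H))⁻¹ *
        ∫⁻ x, ENNReal.ofReal (F x ^ s * H x)) := by
          rw [← mul_assoc, ENNReal.mul_inv_cancel hne ENNReal.ofReal_ne_top, one_mul]
      _ ≤ _ := by gcongr

lemma key2 {n : ℕ} (s : ℝ) (F G : EuclideanSpace ℝ (Fin n) → ℝ)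
    (hm : Measurable G) (K : ℝ) (hK : 0 < K) (h01 : ∀ x, G x ∈ Set.Icc (0 : ℝ) K)
    (C : ℝ≥0∞) (hC : C ≠ ⊤)
    (hb : ∀ x₀ : EuclideanSpace ℝ (Fin n), ∀ R : ℝ, 1 ≤ R →
      (∫⁻ x in Metric.ball x₀ R, ENNReal.ofReal (G x)) ≤ C * ENNReal.ofReal (R ^ s)) :
    ∫⁻ x, ENNReal.ofReal (F x ^ s * G x) ≤ C * Sq s F := by
  have hKi : (0:ℝ) ≤ K⁻¹ := by positivity
  have hm' : Measurable fun x => K⁻¹ * G x := hm.const_mul _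
  have h01' : ∀ x, K⁻¹ * G x ∈ Set.Icc (0:ℝ) 1 := fun x =>
    ⟨mul_nonneg hKi (h01 x).1, by rw [inv_mul_le_iff₀ hK]; simpa using (h01 x).2⟩
  have h := key1 s F (fun x => K⁻¹ * G x) hm' h01' (K⁻¹ * C.toReal) (by positivity) (by
    intro x₀ R hR
    have hp : 0 ≤ R ^ s := Real.rpow_nonneg (by linarith) s
    rw [setInt_iff _ hm' h01' _ _ _ (by positivity), mul_assoc, ENNReal.ofReal_mul hKi,
      ENNReal.ofReal_mul ENNReal.toReal_nonneg, ENNReal.ofReal_toReal hC]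
    simp_rw [ENNReal.ofReal_mul hKi]
    rw [lintegral_const_mul _ hm.ennreal_ofReal]
    gcongr
    exact hb x₀ R hR)
  have e : ∀ x, ENNReal.ofReal (F x ^ s * (K⁻¹ * G x)) =
      ENNReal.ofReal K⁻¹ * ENNReal.ofReal (F x ^ s * G x) := by
    intro x
    rw [← ENNReal.ofReal_mul hKi]; congr 1; ring
  simp_rw [e] at h
  rw [lintegral_const_mul' _ _ ENNReal.ofReal_ne_top, ENNReal.ofReal_mul hKi,
    ENNReal.ofReal_toReal hC, mul_assoc] at h
  exact (ENNReal.mul_le_mul_iff_right (by simpa using hK) ENNReal.ofReal_ne_top).1 h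

lemma algebra_step (I A S : ℝ≥0∞) (hI : I ≠ ⊤) (α β : ℝ) (hβ : 0 < β) (hβα : β < α)
    (h : I ≤ I ^ (1 - β / α) * A ^ (β / α) * S) : I ≤ A * S ^ (α / β) := by
  have hα : 0 < α := hβ.trans hβα
  rcases eq_or_ne I 0 with h0 | h0
  · simp [h0]
  have hp0 : I ^ (1 - β / α) ≠ 0 := (ENNReal.rpow_pos (pos_iff_ne_zero.2 h0) hI).ne'
  have hpt : I ^ (1 - β / α) ≠ ⊤ := ENNReal.rpow_ne_top_of_ne_zero h0 hI
  have e : I = I ^ (1 - β / α) * I ^ (β / α) := by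
    rw [← ENNReal.rpow_add _ _ h0 hI]; simp
  have h2 : I ^ (β / α) ≤ A ^ (β / α) * S := by
    rw [mul_assoc] at h
    nth_rewrite 1 [e] at h
    exact (ENNReal.mul_le_mul_iff_right hp0 hpt).1 h
  have h3 := ENNReal.rpow_le_rpow h2 (div_pos hα hβ).le
  have e1 : β / α * (α / β) = 1 := by field_simp
  rwa [ENNReal.mul_rpow_of_nonneg _ _ (div_pos hα hβ).le, ← ENNReal.rpow_mul,
    ← ENNReal.rpow_mul, e1, ENNReal.rpow_one, ENNReal.rpow_one] at h3

lemma key3 {n : ℕ} (α β : ℝ) (hβ : 0 < β) (hβα : β < α) (F H : EuclideanSpace ℝ (Fin n) → ℝ)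
    (hF : Measurable F) (hF0 : ∀ x, 0 ≤ F x) (hH : IsDimWeight α H) (hA : 0 < Aconst α H) (N : ℕ) :
    ∫⁻ x in {x | F x ≤ N ∧ ‖x‖ < N}, ENNReal.ofReal (F x ^ α * H x) ≤
      ENNReal.ofReal (Aconst α H) * Sq β F ^ (α / β) := by
  have hα : 0 < α := hβ.trans hβα
  set E : Set (EuclideanSpace ℝ (Fin n)) := {x | F x ≤ N ∧ ‖x‖ < N} with hE
  have hEm : MeasurableSet E :=
    (measurableSet_le hF measurable_const).inter (measurableSet_lt measurable_norm measurable_const)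
  set I := ∫⁻ x in E, ENNReal.ofReal (F x ^ α * H x) with hIdef
  have hH1 := hH.2.1
  have hHm := hH.1
  have hN : (0:ℝ) ≤ N := Nat.cast_nonneg N
  have hI : I ≠ ⊤ := by
    have h1 : I ≤ ∫⁻ x in E, ENNReal.ofReal ((N:ℝ) ^ α) := by
      apply setLIntegral_mono measurable_const
      intro x hx
      apply ENNReal.ofReal_le_ofReal
      calc F x ^ α * H x ≤ (N:ℝ) ^ α * 1 := by
            apply mul_le_mul (Real.rpow_le_rpow (hF0 x) hx.1 hα.le) (hH1 x).2 (hH1 x).1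
            positivity
        _ = _ := mul_one _
    refine ne_top_of_le_ne_top ?_ h1
    rw [setLIntegral_const]
    refine ENNReal.mul_ne_top ENNReal.ofReal_ne_top ?_
    refine ne_top_of_le_ne_top
      (measure_ball_lt_top (μ := volume) (x := (0 : EuclideanSpace ℝ (Fin n))) (r := N)).ne
      (measure_mono ?_)
    intro x hx
    rw [mem_ball_zero_iff]; exact hx.2
  apply algebra_step I _ _ hI α β hβ hβα
  have hab : 0 < α - β := by linarith
  have hq1 : β / α ≤ 1 := by rw [div_le_one hα]; exact hβα.le
  have hp : 0 ≤ 1 - β / α := by linarith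
  have hq : 0 ≤ β / α := by positivity
  set G : EuclideanSpace ℝ (Fin n) → ℝ := E.indicator (fun x => F x ^ (α - β) * H x) with hG
  have hGm : Measurable G := ((hF.pow_const _).mul hHm).indicator hEm
  have hmain := key2 β F G hGm (((N:ℝ) + 1) ^ (α - β)) (by positivity) (by
      intro x
      by_cases hx : x ∈ E
      · rw [hG, indicator_of_mem hx]
        refine ⟨mul_nonneg (Real.rpow_nonneg (hF0 x) _) (hH1 x).1, ?_⟩
        calc F x ^ (α - β) * H x ≤ ((N:ℝ) + 1) ^ (α - β) * 1 := by
              apply mul_le_mul (Real.rpow_le_rpow (hF0 x) (by linarith [hx.1]) hab.le)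
                (hH1 x).2 (hH1 x).1
              positivity
          _ = _ := mul_one _
      · rw [hG, indicator_of_notMem hx]
        exact ⟨le_rfl, by positivity⟩)
    (I ^ (1 - β / α) * ENNReal.ofReal (Aconst α H) ^ (β / α))
    (ENNReal.mul_ne_top (ENNReal.rpow_ne_top_of_nonneg hp hI)
      (ENNReal.rpow_ne_top_of_nonneg hq ENNReal.ofReal_ne_top)) (by
      intro x₀ R hR
      have hR0 : 0 ≤ R := by linarith
      have e1 : ∀ x, ENNReal.ofReal (G x) =
          (E.indicator (fun x => ENNReal.ofReal (F x ^ α * H x)) x) ^ (1 - β / α) *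
            (ENNReal.ofReal (H x)) ^ (β / α) := by
        intro x
        by_cases hx : x ∈ E
        · rw [hG, indicator_of_mem hx, indicator_of_mem hx]
          have a1 : 0 ≤ F x ^ α := Real.rpow_nonneg (hF0 x) _
          rw [ENNReal.ofReal_rpow_of_nonneg (mul_nonneg a1 (hH1 x).1) hp,
            ENNReal.ofReal_rpow_of_nonneg (hH1 x).1 hq,
            ← ENNReal.ofReal_mul (Real.rpow_nonneg (mul_nonneg a1 (hH1 x).1) _),
            Real.mul_rpow a1 (hH1 x).1, ← Real.rpow_mul (hF0 x), mul_assoc,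
            ← Real.rpow_add_of_nonneg (hH1 x).1 hp hq]
          have e2 : α * (1 - β / α) = α - β := by field_simp
          rw [e2]; simp
        · rw [hG, indicator_of_notMem hx, indicator_of_notMem hx, ENNReal.zero_rpow_of_pos]
          · simp
          · have : β / α < 1 := by rw [div_lt_one hα]; exact hβα
            linarith
      have hfm : Measurable (E.indicator (fun x => ENNReal.ofReal (F x ^ α * H x))) :=
        ((hF.pow_const _).mul hHm).ennreal_ofReal.indicator hEm
      simp_rw [e1]
      refine (ENNReal.lintegral_mul_norm_pow_le hfm.aemeasurable
        hHm.ennreal_ofReal.aemeasurable hp hq (by ring)).trans ?_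
      rw [mul_assoc]
      have hRs : ENNReal.ofReal (R ^ β) = ENNReal.ofReal (R ^ α) ^ (β / α) := by
        rw [ENNReal.ofReal_rpow_of_nonneg (Real.rpow_nonneg hR0 _) hq, ← Real.rpow_mul hR0]
        congr 2; field_simp
      rw [hRs, ← ENNReal.mul_rpow_of_nonneg _ _ hq, ← ENNReal.ofReal_mul hA.le]
      gcongr
      · rw [hIdef, ← lintegral_indicator hEm]
        exact setLIntegral_le_lintegral _ _
      · rw [← setInt_iff H hHm hH1 _ _ _ (mul_nonneg hA.le (Real.rpow_nonneg hR0 _))]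
        exact Aconst_spec α H hH x₀ R hR)
  refine le_trans (le_of_eq ?_) hmain
  rw [hIdef, ← lintegral_indicator hEm]
  apply lintegral_congr
  intro x
  by_cases hx : x ∈ E
  · rw [hG, indicator_of_mem hx, indicator_of_mem hx, ← mul_assoc,
      ← Real.rpow_add_of_nonneg (hF0 x) hβ.le hab.le]
    simp
  · rw [hG, indicator_of_notMem hx, indicator_of_notMem hx]; simp

/-- Theorem 4.1 of the paper, due to Shayya: for `0 < β < α ≤ n`,
`M_α F ≤ M_β F` for every nonnegative measurable `F` on `ℝⁿ`. -/
theorem Msup_mono :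
    ∀ n : ℕ, 1 ≤ n →
    ∀ α β : ℝ, 0 < β → β < α → α ≤ n →
    ∀ F : EuclideanSpace ℝ (Fin n) → ℝ, Measurable F → (∀ x, 0 ≤ F x) →
      Msup α F ≤ Msup β F := by
  intro n _ α β hβ hβα _ F hF hF0
  have hα : 0 < α := hβ.trans hβα
  change Sq α F ^ (1 / α) ≤ Sq β F ^ (1 / β)
  have hS : Sq α F ≤ Sq β F ^ (α / β) := by
    refine iSup_le ?_
    rintro ⟨H, hH, hA⟩
    have hne : ENNReal.ofReal (Aconst α H) ≠ 0 := by simpa using hA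
    have hI : ∫⁻ x, ENNReal.ofReal (F x ^ α * H x) ≤
        ENNReal.ofReal (Aconst α H) * Sq β F ^ (α / β) := by
      have hU : (⋃ N : ℕ, {x : EuclideanSpace ℝ (Fin n) | F x ≤ N ∧ ‖x‖ < N}) = univ := by
        rw [eq_univ_iff_forall]
        intro x
        obtain ⟨k, hk⟩ := exists_nat_gt (max (F x) ‖x‖)
        exact mem_iUnion.2 ⟨k, ((le_max_left _ _).trans_lt hk).le, (le_max_right _ _).trans_lt hk⟩
      have hmono : Monotone fun N : ℕ => {x : EuclideanSpace ℝ (Fin n) | F x ≤ N ∧ ‖x‖ < N} := by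
        intro a b hab x hx
        have : (a:ℝ) ≤ b := Nat.cast_le.2 hab
        exact ⟨hx.1.trans this, hx.2.trans_le this⟩
      rw [← setLIntegral_univ, ← hU, setLIntegral_iUnion_of_directed _ hmono.directed_le]
      exact iSup_le fun N => key3 α β hβ hβα F H hF hF0 hH hA N
    calc (ENNReal.ofReal (Aconst α H))⁻¹ * ∫⁻ x, ENNReal.ofReal (F x ^ α * H x)
        ≤ (ENNReal.ofReal (Aconst α H))⁻¹ *
          (ENNReal.ofReal (Aconst α H) * Sq β F ^ (α / β)) := by gcongr
      _ = _ := by rw [← mul_assoc, ENNReal.inv_mul_cancel hne ENNReal.ofReal_ne_top, one_mul]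
  calc Sq α F ^ (1 / α) ≤ (Sq β F ^ (α / β)) ^ (1 / α) :=
        ENNReal.rpow_le_rpow hS (by positivity)
    _ = _ := by
      rw [← ENNReal.rpow_mul]; congr 1; field_simp
end
end

section
/- Let ε₀ > 0, 0 < c ≤ C₁, and let γ : [0, ε₀] → ℝ² be a C² unit-speed curve with c ≤ |γ''(s)| ≤ C₁ for all s ∈ [0, ε₀]. Let ℓ ⊂ ℝ² be a line. Then there is a constant C, depending only on c, C₁, and ε₀, such that for every 0 < δ ≤ 1, the Lebesgue measure of the intersection of the δ-neighborhoods satisfies | { x : dist(x, ℓ) ≤ δ } ∩ { x : dist(x, γ([0, ε₀])) ≤ δ } | ≤ C δ^{3/2}. -/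
open MeasureTheory Metric Set

noncomputable section

abbrev ℝ2 : Type := EuclideanSpace ℝ (Fin 2)


lemma aux_mvt (f f' : ℝ → ℝ) (a b m : ℝ) (hf : ∀ x ∈ Icc a b, HasDerivWithinAt f (f' x) (Icc a b) x)
    {s t : ℝ} (hs : s ∈ Icc a b) (ht : t ∈ Icc a b) (hst : s < t)
    (hm : ∀ x ∈ Ioo s t, m ≤ |f' x|) : m * |s - t| ≤ |f s - f t| := by
  have hsub : Icc s t ⊆ Icc a b := Icc_subset_Icc hs.1 ht.2
  obtain ⟨x, hx, he⟩ := exists_hasDerivAt_eq_slope f f' hst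
    (fun x hx => ((hf x (hsub hx)).mono hsub).continuousWithinAt)
    (fun x hx => ((hf x (hsub ⟨hx.1.le, hx.2.le⟩)).mono hsub).hasDerivAt (Icc_mem_nhds hx.1 hx.2))
  have h1 : f t - f s = f' x * (t - s) := by
    rw [he]; field_simp [(sub_pos.2 hst).ne']
  have h2 : |f s - f t| = |f' x| * |s - t| := by
    rw [abs_sub_comm, h1, abs_mul, abs_sub_comm t s]
  rw [h2]
  exact mul_le_mul_of_nonneg_right (hm x hx) (abs_nonneg _)

lemma aux_mvt' (f f' : ℝ → ℝ) (a b m : ℝ) (hf : ∀ x ∈ Icc a b, HasDerivWithinAt f (f' x) (Icc a b) x)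
    (S : Set ℝ) (hS : S ⊆ Icc a b)
    (hm : ∀ s ∈ S, ∀ t ∈ S, ∀ x ∈ Ioo s t, m ≤ |f' x|) {s t : ℝ} (hs : s ∈ S) (ht : t ∈ S) :
    m * |s - t| ≤ |f s - f t| := by
  rcases lt_trichotomy s t with h | h | h
  · exact aux_mvt f f' a b m hf (hS hs) (hS ht) h (hm s hs t ht)
  · subst h; simp
  · rw [abs_sub_comm, abs_sub_comm (f s)]
    exact aux_mvt f f' a b m hf (hS ht) (hS hs) h (hm t ht s hs)

lemma aux_piece (c C₁ : ℝ) (hc : 0 < c) (hcC : c ≤ C₁) (a b : ℝ) (hab : a < b)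
    (hlen : C₁ * (b - a) ≤ 1 / 4)
    (Y X1 Y1 X2 Y2 : ℝ → ℝ)
    (hY : ∀ x ∈ Icc a b, HasDerivWithinAt Y (Y1 x) (Icc a b) x)
    (hX1 : ∀ x ∈ Icc a b, HasDerivWithinAt X1 (X2 x) (Icc a b) x)
    (hY1 : ∀ x ∈ Icc a b, HasDerivWithinAt Y1 (Y2 x) (Icc a b) x)
    (hu : ∀ x ∈ Icc a b, X1 x ^ 2 + Y1 x ^ 2 = 1)
    (hl : ∀ x ∈ Icc a b, c ^ 2 ≤ X2 x ^ 2 + Y2 x ^ 2)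
    (hr : ∀ x ∈ Icc a b, X2 x ^ 2 + Y2 x ^ 2 ≤ C₁ ^ 2)
    (q δ : ℝ) (hδ : 0 < δ) (hδ1 : δ ≤ 1) :
    ∃ T : Fin 3 → Set ℝ, (∀ s ∈ Icc a b, |Y s - q| ≤ 2 * δ → ∃ j, s ∈ T j) ∧
      ∀ j, T j ⊆ Icc a b ∧ ∀ s ∈ T j, ∀ t ∈ T j, |s - t| ≤ (8 + 4 / c) * √δ := by
  have hC : 0 < C₁ := hc.trans_le hcC
  have hsq : 0 < √δ := Real.sqrt_pos.2 hδ
  have hsq2 : √δ * √δ = δ := Real.mul_self_sqrt hδ.le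
  have hsq1 : √δ ≤ 1 := Real.sqrt_le_one.2 hδ1
  have hc4 : 0 < 4 / c := by positivity
  have hYd : ∀ s t, |Y s - q| ≤ 2 * δ → |Y t - q| ≤ 2 * δ → |Y s - Y t| ≤ 4 * δ := by
    intro s t h1 h2
    rw [abs_le] at *
    constructor <;> linarith [h1.1, h1.2, h2.1, h2.2]
  by_cases h : ∃ s0 ∈ Icc a b, |X1 s0| < 1 / 2
  · obtain ⟨s0, hs0, hs0'⟩ := h
    have hb : ∀ s ∈ Icc a b, 1 / 2 ≤ |Y1 s| := by
      intro s hs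
      have h1 : ‖X1 s - X1 s0‖ ≤ C₁ * ‖s - s0‖ :=
        (convex_Icc a b).norm_image_sub_le_of_norm_hasDerivWithin_le hX1
          (fun x hx => by
            rw [Real.norm_eq_abs]
            exact abs_le_of_sq_le_sq (by nlinarith [hr x hx, sq_nonneg (Y2 x)]) hC.le) hs0 hs
      rw [Real.norm_eq_abs, Real.norm_eq_abs] at h1
      have h2 : |s - s0| ≤ b - a := by
        rw [abs_le]; constructor <;> linarith [hs.1, hs.2, hs0.1, hs0.2]
      have h3 : |X1 s - X1 s0| ≤ 1 / 4 := h1.trans ((mul_le_mul_of_nonneg_left h2 hC.le).trans hlen)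
      have h4 : |X1 s| ≤ 3 / 4 := by
        rw [abs_le] at *
        rw [abs_lt] at hs0'
        constructor <;> linarith [h3.1, h3.2, hs0'.1, hs0'.2]
      have h5 : X1 s ^ 2 ≤ (3 / 4) ^ 2 := sq_le_sq' (abs_le.1 h4).1 (abs_le.1 h4).2
      by_contra hcon
      push Not at hcon
      have h6 : Y1 s ^ 2 ≤ (1 / 2) ^ 2 := sq_le_sq' (abs_lt.1 hcon).1.le (abs_lt.1 hcon).2.le
      linarith [hu s hs]
    refine ⟨fun _ => {s | s ∈ Icc a b ∧ |Y s - q| ≤ 2 * δ}, fun s hs h => ⟨0, hs, h⟩, fun j =>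
      ⟨fun s hs => hs.1, fun s hs t ht => ?_⟩⟩
    have := aux_mvt' Y Y1 a b (1 / 2) hY (Icc a b) subset_rfl
      (fun s hs t ht x hx => hb x ⟨hs.1.trans hx.1.le, hx.2.le.trans ht.2⟩) hs.1 ht.1
    have h2 := hYd s t hs.2 ht.2
    nlinarith
  · push Not at h
    have hperp : ∀ x ∈ Icc a b, X1 x * X2 x + Y1 x * Y2 x = 0 := by
      intro x hx
      have h1 := ((hX1 x hx).fun_pow 2).fun_add ((hY1 x hx).fun_pow 2)
      have h2 : HasDerivWithinAt (fun y => X1 y ^ 2 + Y1 y ^ 2) 0 (Icc a b) x :=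
        (hasDerivWithinAt_const x (Icc a b) (1 : ℝ)).congr hu (hu x hx)
      have h3 := (uniqueDiffOn_Icc hab x hx).eq_deriv _ h1 h2
      norm_num at h3
      linarith
    have hb : ∀ s ∈ Icc a b, c / 2 ≤ |Y2 s| := by
      intro s hs
      have h1 : (1 / 2) ^ 2 ≤ X1 s ^ 2 := by
        rw [← sq_abs (X1 s)]; exact pow_le_pow_left₀ (by norm_num) (h s hs) 2
      have h2 : Y2 s ^ 2 = (X2 s ^ 2 + Y2 s ^ 2) * X1 s ^ 2 := by
        have e1 : X1 s * X2 s = - (Y1 s * Y2 s) := by linarith [hperp s hs]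
        have : (X2 s ^ 2 + Y2 s ^ 2) * X1 s ^ 2 = (X1 s * X2 s) ^ 2 + Y2 s ^ 2 * X1 s ^ 2 := by ring
        rw [this, e1]
        linear_combination (- Y2 s ^ 2) * hu s hs
      have h3 : (c / 2) ^ 2 ≤ Y2 s ^ 2 := by
        rw [h2]
        calc (c / 2) ^ 2 = c ^ 2 * (1 / 2) ^ 2 := by ring
          _ ≤ _ := mul_le_mul (hl s hs) h1 (by positivity) (by positivity)
      rw [← sq_abs (Y2 s)] at h3
      exact le_of_sq_le_sq h3 (abs_nonneg _)
    have hexp : ∀ s ∈ Icc a b, ∀ t ∈ Icc a b, c / 2 * |s - t| ≤ |Y1 s - Y1 t| := fun s hs t ht =>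
      aux_mvt' Y1 Y2 a b (c / 2) hY1 (Icc a b) subset_rfl
      (fun s hs t ht x hx => hb x ⟨hs.1.trans hx.1.le, hx.2.le.trans ht.2⟩) hs ht
    have hinj : InjOn Y1 (Icc a b) := by
      intro s hs t ht hst
      have := hexp s hs t ht
      rw [hst, sub_self, abs_zero] at this
      have h0 : |s - t| ≤ 0 := by
        by_contra hh
        push Not at hh
        nlinarith [mul_pos (half_pos hc) hh]
      exact sub_eq_zero.1 (abs_nonpos_iff.1 h0)
    have hmon := ContinuousOn.strictMonoOn_of_injOn_Icc' hab.le
      (fun x hx => (hY1 x hx).continuousWithinAt) hinj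
    refine ⟨![{s | s ∈ Icc a b ∧ |Y s - q| ≤ 2 * δ ∧ √δ < Y1 s},
      {s | s ∈ Icc a b ∧ |Y s - q| ≤ 2 * δ ∧ |Y1 s| ≤ √δ},
      {s | s ∈ Icc a b ∧ |Y s - q| ≤ 2 * δ ∧ Y1 s < -√δ}], fun s hs h => ?_, ?_⟩
    · by_cases h1 : √δ < Y1 s
      · exact ⟨0, hs, h, h1⟩
      by_cases h2 : Y1 s < -√δ
      · exact ⟨2, hs, h, h2⟩
      push Not at h1 h2
      exact ⟨1, hs, h, abs_le.2 ⟨h2, h1⟩⟩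
    · have key : ∀ S : Set ℝ, S ⊆ {s | s ∈ Icc a b ∧ |Y s - q| ≤ 2 * δ} →
          (∀ s ∈ S, ∀ t ∈ S, ∀ x ∈ Ioo s t, √δ ≤ |Y1 x|) →
          ∀ s ∈ S, ∀ t ∈ S, |s - t| ≤ (8 + 4 / c) * √δ := by
        intro S hS hm s hs t ht
        have h1 := aux_mvt' Y Y1 a b (√δ) hY S (fun x hx => (hS hx).1) hm hs ht
        have h2 := hYd s t (hS hs).2 (hS ht).2
        have h3 : √δ * |s - t| ≤ √δ * (4 * √δ) := by nlinarith
        have h4 := le_of_mul_le_mul_left h3 hsq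
        nlinarith [mul_pos hc4 hsq]
      have hbt : ∀ s ∈ Icc a b, ∀ t ∈ Icc a b, ∀ x ∈ Ioo s t,
          min (Y1 s) (Y1 t) ≤ Y1 x ∧ Y1 x ≤ max (Y1 s) (Y1 t) := by
        intro s hs t ht x hx
        have hxI : x ∈ Icc a b := ⟨hs.1.trans hx.1.le, hx.2.le.trans ht.2⟩
        rcases hmon with hm | hm
        · exact ⟨(min_le_left _ _).trans (hm hs hxI hx.1).le,
            (hm hxI ht hx.2).le.trans (le_max_right _ _)⟩
        · exact ⟨(min_le_right _ _).trans (hm hxI ht hx.2).le,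
            (hm hs hxI hx.1).le.trans (le_max_left _ _)⟩
      intro j
      fin_cases j
      · refine ⟨fun s hs => hs.1, key _ (fun s hs => ⟨hs.1, hs.2.1⟩) ?_⟩
        intro s hs t ht x hx
        exact (lt_min hs.2.2 ht.2.2).le.trans ((hbt s hs.1 t ht.1 x hx).1.trans (le_abs_self _))
      · refine ⟨fun s hs => hs.1, fun s hs t ht => ?_⟩
        have h1 := hexp s hs.1 t ht.1
        have h2 : |Y1 s - Y1 t| ≤ 2 * √δ := (abs_sub _ _).trans (by linarith [hs.2.2, ht.2.2])
        have h3 : |s - t| ≤ 4 / c * √δ := by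
          rw [div_mul_eq_mul_div, le_div_iff₀ hc]; nlinarith
        nlinarith
      · refine ⟨fun s hs => hs.1, key _ (fun s hs => ⟨hs.1, hs.2.1⟩) ?_⟩
        intro s hs t ht x hx
        have := (hbt s hs.1 t ht.1 x hx).2.trans (max_lt hs.2.2 ht.2.2).le
        exact le_trans (by linarith) (neg_le_abs _)

lemma aux_rect (b : OrthonormalBasis (Fin 2) ℝ ℝ2) (u v r w : ℝ) (hr : 0 ≤ r) :
    volume {x : ℝ2 | |inner ℝ (b 0) x - u| ≤ r ∧ |inner ℝ (b 1) x - v| ≤ w} ≤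
      ENNReal.ofReal (2 * r * (2 * w)) := by
  have h1 := b.measurePreserving_repr
  have h2 := EuclideanSpace.volume_preserving_symm_measurableEquiv_toLp (Fin 2)
  have h3 := h2.comp h1
  have he : {x : ℝ2 | |inner ℝ (b 0) x - u| ≤ r ∧ |inner ℝ (b 1) x - v| ≤ w} =
      ((MeasurableEquiv.toLp 2 (Fin 2 → ℝ)).symm ∘ b.repr) ⁻¹'
        (Icc ![u - r, v - w] ![u + r, v + w]) := by
    ext x
    simp [Pi.le_def, Fin.forall_fin_two, abs_le, b.repr_apply_apply]
    constructor
    · rintro ⟨⟨_, _⟩, _, _⟩; refine ⟨⟨?_, ?_⟩, ?_, ?_⟩ <;> linarith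
    · rintro ⟨⟨_, _⟩, _, _⟩; refine ⟨⟨?_, ?_⟩, ?_, ?_⟩ <;> linarith
  rw [he, h3.measure_preimage measurableSet_Icc.nullMeasurableSet, Real.volume_Icc_pi]
  simp only [Fin.prod_univ_two]
  rw [← ENNReal.ofReal_mul (by simp; linarith)]
  apply le_of_eq
  congr 1
  simp
  ring

/-- the Euclidean geometric fact behind Lemma 5.1 of the paper: the
`δ`-neighborhood of a unit-speed `C²` curve with curvature bounded between `c` and `C₁`
meets the `δ`-neighborhood of any line in a set of Lebesgue measure `O(δ^{3/2})`. -/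
theorem curve_line_neighborhood_intersection :
    ∀ ε₀ : ℝ, 0 < ε₀ →
    ∀ c C₁ : ℝ, 0 < c → c ≤ C₁ →
    ∃ C : ℝ, 0 < C ∧
      ∀ γ : ℝ → ℝ2, ContDiffOn ℝ 2 γ (Set.Icc 0 ε₀) →
        (∀ t ∈ Set.Icc (0 : ℝ) ε₀, ‖iteratedDerivWithin 1 γ (Set.Icc 0 ε₀) t‖ = 1) →
        (∀ t ∈ Set.Icc (0 : ℝ) ε₀,
          c ≤ ‖iteratedDerivWithin 2 γ (Set.Icc 0 ε₀) t‖ ∧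
            ‖iteratedDerivWithin 2 γ (Set.Icc 0 ε₀) t‖ ≤ C₁) →
      ∀ p d : ℝ2, ‖d‖ = 1 →
      ∀ δ : ℝ, 0 < δ → δ ≤ 1 →
        volume ({x : ℝ2 | Metric.infDist x {y : ℝ2 | ∃ t : ℝ, y = p + t • d} ≤ δ} ∩
            {x : ℝ2 | Metric.infDist x (γ '' Set.Icc 0 ε₀) ≤ δ}) ≤
          ENNReal.ofReal (C * δ ^ ((3 : ℝ) / 2)) := by
  intro ε₀ hε c C₁ hc hcC
  have hC : 0 < C₁ := hc.trans_le hcC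
  obtain ⟨N, hN⟩ := exists_nat_gt (4 * C₁ * ε₀)
  have hN0 : (0 : ℝ) < N := lt_trans (by positivity) hN
  set D : ℝ := 8 + 4 / c with hD
  have hD0 : 0 < D := by positivity
  refine ⟨N * 3 * (4 * (D + 1)), by positivity, ?_⟩
  intro γ hγ hγ1 hγ2 p d hd δ hδ hδ1
  set I : Set ℝ := Icc 0 ε₀ with hI
  have hUI : UniqueDiffOn ℝ I := uniqueDiffOn_Icc hε
  set G1 := iteratedDerivWithin 1 γ I with hG1
  set G2 := iteratedDerivWithin 2 γ I with hG2
  have hd1 : ∀ t ∈ I, HasDerivWithinAt γ (G1 t) I t := by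
    intro t ht
    rw [hG1, iteratedDerivWithin_one]
    exact ((hγ.differentiableOn (by norm_num)) t ht).hasDerivWithinAt
  have hd2 : ∀ t ∈ I, HasDerivWithinAt G1 (G2 t) I t := by
    intro t ht
    rw [hG2, iteratedDerivWithin_succ]
    exact ((hγ.differentiableOn_iteratedDerivWithin (m := 1) (by norm_num) hUI) t ht).hasDerivWithinAt
  obtain ⟨b, hb⟩ : ∃ b : OrthonormalBasis (Fin 2) ℝ ℝ2, b 0 = d := by
    have ho : Orthonormal ℝ (({0} : Set (Fin 2)).domRestrict (fun _ => d)) := by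
      constructor
      · intro i; exact hd
      · intro i j hij; exact absurd (Subsingleton.elim i j) hij
    obtain ⟨b, hb⟩ := ho.exists_orthonormalBasis_extension_of_card_eq (by simp)
    exact ⟨b, hb 0 rfl⟩
  have hinner : ∀ (i : Fin 2) (f : ℝ → ℝ2) (f' : ℝ2) (t : ℝ) (s : Set ℝ), HasDerivWithinAt f f' s t →
      HasDerivWithinAt (fun x => inner ℝ (b i) (f x)) (inner ℝ (b i) f') s t := by
    intro i f f' t s h
    exact ((innerSL ℝ (b i)).hasFDerivAt.comp_hasDerivWithinAt t h)
  have hnorm : ∀ v : ℝ2, (inner ℝ (b 0) v) ^ 2 + (inner ℝ (b 1) v) ^ 2 = ‖v‖ ^ 2 := by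
    intro v
    have := b.sum_sq_norm_inner_right v
    simpa [Fin.sum_univ_two] using this
  have hle : ∀ (i : Fin 2) (v : ℝ2), |inner ℝ (b i) v| ≤ ‖v‖ := by
    intro i v
    simpa using abs_real_inner_le_norm (b i) v
  have hXL : ∀ s ∈ I, ∀ t ∈ I, |inner ℝ (b 0) (γ s) - inner ℝ (b 0) (γ t)| ≤ |s - t| := by
    intro s hs t ht
    have := (convex_Icc 0 ε₀).norm_image_sub_le_of_norm_hasDerivWithin_le
      (fun x hx => hinner 0 γ _ x I (hd1 x hx)) (C := 1)
      (fun x hx => by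
        rw [Real.norm_eq_abs]; exact (hle 0 _).trans (hγ1 x hx).le) ht hs
    simpa using this
  have hpieces : ∀ k : Fin N, ∃ T : Fin 3 → Set ℝ,
      (∀ s ∈ Icc ((k : ℝ) * (ε₀ / N)) (((k : ℝ) + 1) * (ε₀ / N)),
        |inner ℝ (b 1) (γ s) - inner ℝ (b 1) p| ≤ 2 * δ → ∃ j, s ∈ T j) ∧
      ∀ j, T j ⊆ I ∧ ∀ s ∈ T j, ∀ t ∈ T j, |s - t| ≤ D * √δ := by
    intro k
    have hk1 : (k : ℝ) + 1 ≤ N := by exact_mod_cast k.2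
    have hpos : 0 < ε₀ / N := by positivity
    have hsub : Icc ((k : ℝ) * (ε₀ / N)) (((k : ℝ) + 1) * (ε₀ / N)) ⊆ I := by
      apply Icc_subset_Icc
      · positivity
      · calc ((k : ℝ) + 1) * (ε₀ / N) ≤ N * (ε₀ / N) := mul_le_mul_of_nonneg_right hk1 hpos.le
          _ = ε₀ := by field_simp
    obtain ⟨T, hT1, hT2⟩ := aux_piece c C₁ hc hcC ((k : ℝ) * (ε₀ / N)) (((k : ℝ) + 1) * (ε₀ / N))
      (by nlinarith)
      (by
        have : C₁ * (((k : ℝ) + 1) * (ε₀ / N) - (k : ℝ) * (ε₀ / N)) = C₁ * ε₀ / N := by ring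
        rw [this, div_le_iff₀ hN0]; linarith)
      (fun s => inner ℝ (b 1) (γ s)) (fun s => inner ℝ (b 0) (G1 s)) (fun s => inner ℝ (b 1) (G1 s))
      (fun s => inner ℝ (b 0) (G2 s)) (fun s => inner ℝ (b 1) (G2 s))
      (fun x hx => (hinner 1 _ _ x I (hd1 x (hsub hx))).mono hsub)
      (fun x hx => (hinner 0 _ _ x I (hd2 x (hsub hx))).mono hsub)
      (fun x hx => (hinner 1 _ _ x I (hd2 x (hsub hx))).mono hsub)
      (fun x hx => by simp only [hnorm]; rw [hγ1 x (hsub hx)]; norm_num)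
      (fun x hx => by simp only [hnorm]; exact pow_le_pow_left₀ hc.le (hγ2 x (hsub hx)).1 2)
      (fun x hx => by
        simp only [hnorm]; exact pow_le_pow_left₀ (norm_nonneg _) (hγ2 x (hsub hx)).2 2)
      (inner ℝ (b 1) p) δ hδ hδ1
    exact ⟨T, hT1, fun j => ⟨(hT2 j).1.trans hsub, (hT2 j).2⟩⟩
  choose T hT1 hT2 using hpieces
  have hsq : 0 < √δ := Real.sqrt_pos.2 hδ
  have hsq2 : √δ * √δ = δ := Real.mul_self_sqrt hδ.le
  have hsq1 : √δ ≤ 1 := Real.sqrt_le_one.2 hδ1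
  let A : Fin N × Fin 3 → Set ℝ2 := fun kj =>
    {x | |inner ℝ (b 1) x - inner ℝ (b 1) p| ≤ δ ∧ ∃ s ∈ T kj.1 kj.2, dist x (γ s) ≤ δ}
  have hA : ∀ kj, volume (A kj) ≤ ENNReal.ofReal (4 * (D + 1) * (δ * √δ)) := by
    intro kj
    by_cases hne : (T kj.1 kj.2).Nonempty
    · obtain ⟨s0, hs0⟩ := hne
      refine (measure_mono ?_).trans ((aux_rect b (inner ℝ (b 0) (γ s0)) (inner ℝ (b 1) p)
        ((D + 1) * √δ) δ (by positivity)).trans (ENNReal.ofReal_le_ofReal (le_of_eq (by ring))))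
      rintro x ⟨hx1, s, hs, hx2⟩
      refine ⟨?_, hx1⟩
      have h1 := hXL s ((hT2 _ _).1 hs) s0 ((hT2 _ _).1 hs0)
      have h2 := (hT2 _ _).2 s hs s0 hs0
      have h3 : |inner ℝ (b 0) x - inner ℝ (b 0) (γ s)| ≤ δ := by
        rw [← inner_sub_right]
        exact (hle 0 _).trans (by rwa [← dist_eq_norm])
      calc _ ≤ _ := abs_sub_le _ (inner ℝ (b 0) (γ s)) _
        _ ≤ δ + D * √δ := add_le_add h3 (h1.trans h2)
        _ ≤ (D + 1) * √δ := by nlinarith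
    · have : A kj = ∅ := by
        ext x
        simp only [A, mem_ofPred_eq, mem_empty_iff_false, iff_false]
        rintro ⟨_, s, hs, _⟩
        exact hne ⟨s, hs⟩
      simp [this]
  have hcover : ({x : ℝ2 | Metric.infDist x {y : ℝ2 | ∃ t : ℝ, y = p + t • d} ≤ δ} ∩
            {x : ℝ2 | Metric.infDist x (γ '' I) ≤ δ}) ⊆ ⋃ kj, A kj := by
    rintro x ⟨hx1, hx2⟩
    have h1 : |inner ℝ (b 1) x - inner ℝ (b 1) p| ≤ δ := by
      refine le_trans ?_ hx1
      refine (Metric.le_infDist (s := {y : ℝ2 | ∃ t : ℝ, y = p + t • d}) ⟨p, 0, by simp⟩).2 ?_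
      rintro y ⟨t, rfl⟩
      have h10 : inner ℝ (b 1) d = (0 : ℝ) := by
        rw [← hb]; exact b.orthonormal.2 (by decide)
      have : inner ℝ (b 1) x - inner ℝ (b 1) p = inner ℝ (b 1) (x - (p + t • d)) := by
        rw [inner_sub_right, inner_add_right, inner_smul_right, h10]; ring
      rw [this, dist_eq_norm]
      exact hle 1 _
    have hcomp : IsCompact (γ '' I) := isCompact_Icc.image_of_continuousOn hγ.continuousOn
    obtain ⟨y, ⟨s, hs, rfl⟩, hy⟩ := hcomp.exists_infDist_eq_dist
      ⟨γ 0, 0, ⟨le_rfl, hε.le⟩, rfl⟩ x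
    have hxs : dist x (γ s) ≤ δ := hy ▸ hx2
    have h2 : |inner ℝ (b 1) (γ s) - inner ℝ (b 1) p| ≤ 2 * δ := by
      have h3 : |inner ℝ (b 1) (γ s) - inner ℝ (b 1) x| ≤ δ := by
        rw [← inner_sub_right]
        exact (hle 1 _).trans (by rwa [← dist_eq_norm, dist_comm])
      calc _ ≤ _ := abs_sub_le _ (inner ℝ (b 1) x) _
        _ ≤ 2 * δ := by linarith
    obtain ⟨k, hk⟩ : ∃ k : Fin N, s ∈ Icc ((k : ℝ) * (ε₀ / N)) (((k : ℝ) + 1) * (ε₀ / N)) := by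
      have hpos : 0 < ε₀ / N := by positivity
      have hNn : 0 < N := by exact_mod_cast hN0
      rcases eq_or_lt_of_le hs.2 with he | hlt
      · refine ⟨⟨N - 1, by omega⟩, ?_⟩
        have hc1 : ((N - 1 : ℕ) : ℝ) = N - 1 := by rw [Nat.cast_sub hNn]; simp
        simp only [hc1, he]
        have : (N : ℝ) * (ε₀ / N) = ε₀ := by field_simp
        constructor <;> nlinarith
      · have h0 : 0 ≤ s / (ε₀ / N) := div_nonneg hs.1 hpos.le
        refine ⟨⟨⌊s / (ε₀ / N)⌋₊, ?_⟩, ?_, ?_⟩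
        · rw [Nat.floor_lt h0, div_lt_iff₀ hpos]
          have : (N : ℝ) * (ε₀ / N) = ε₀ := by field_simp
          linarith
        · exact (le_div_iff₀ hpos).1 (Nat.floor_le h0)
        · exact ((div_lt_iff₀ hpos).1 (Nat.lt_floor_add_one _)).le
    obtain ⟨j, hj⟩ := hT1 k s hk h2
    exact mem_iUnion.2 ⟨(k, j), h1, s, hj, hxs⟩
  have hpow : δ ^ ((3 : ℝ) / 2) = δ * √δ := by
    rw [Real.sqrt_eq_rpow, show (3 : ℝ) / 2 = 1 + 1 / 2 by norm_num, Real.rpow_add hδ, Real.rpow_one]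
  calc _ ≤ volume (⋃ kj, A kj) := measure_mono hcover
    _ ≤ ∑ kj, volume (A kj) := measure_iUnion_fintype_le _ _
    _ ≤ ∑ kj : Fin N × Fin 3, ENNReal.ofReal (4 * (D + 1) * (δ * √δ)) :=
      Finset.sum_le_sum fun kj _ => hA kj
    _ = ENNReal.ofReal (∑ kj : Fin N × Fin 3, (4 * (D + 1) * (δ * √δ))) :=
      (ENNReal.ofReal_sum_of_nonneg fun _ _ => by positivity).symm
    _ = _ := by
      rw [hpow]
      congr 1
      simp
      ring
end
end

section
/- For each α ∈ (1,2) there exist a finite Borel measure μ on the unit sphere S² ⊂ ℝ³ satisfying μ(B(x,r)) ≤ C_μ r^α for all x ∈ ℝ³ and all r > 0, and a strictly increasing sequence of positive integers (k_n), such that for every p ≥ 2 there are constants 0 < c_p ≤ C_p with: c_p · k_n^{1/4 − (α−1)/(2p)} ≤ ( ∫_{S²} |H_{k_n}|^p dμ )^{1/p} ≤ C_p · k_n^{1/4 − (α−1)/(2p)} for all n. -/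
open MeasureTheory Metric Set
open scoped ENNReal

noncomputable section

abbrev ℝ3 : Type := EuclideanSpace ℝ (Fin 3)

/-- The highest-weight spherical harmonic `H_k`: the restriction to `S²` of the harmonic
polynomial `k^{1/4}(x₁ + i x₂)^k`. -/
def highestWeight (k : ℕ) (x : ℝ3) : ℂ :=
  ((k : ℝ) ^ ((1 : ℝ) / 4) : ℝ) * ((x 0 : ℂ) + Complex.I * (x 1 : ℂ)) ^ k


def sqM : Measure (ℝ × ℝ) :=
  (volume.restrict (Icc (0:ℝ) 1)).prod (volume.restrict (Icc (0:ℝ) 1))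

instance : IsFiniteMeasure sqM := by unfold sqM; infer_instance

lemma sqM_eq : sqM = (volume : Measure (ℝ × ℝ)).restrict (Icc (0:ℝ) 1 ×ˢ Icc (0:ℝ) 1) := by
  unfold sqM
  rw [Measure.prod_restrict, Measure.volume_eq_prod]

def phiM (b : ℝ) (q : ℝ × ℝ) : ℝ3 :=
  !₂[q.1 / 2, Real.sqrt (1 - (q.1 / 2) ^ 2 - (q.2 ^ b / 2) ^ 2), q.2 ^ b / 2]

lemma phiM_cont (b : ℝ) (hb : 0 < b) : Continuous (phiM b) := by
  unfold phiM
  have h : Continuous (fun q : ℝ × ℝ => q.2 ^ b) :=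
    (Real.continuous_rpow_const hb.le).comp continuous_snd
  refine (PiLp.continuous_toLp 2 _).comp ?_
  refine continuous_pi fun i => ?_
  fin_cases i <;> simp <;> fun_prop

lemma phiM_rad (b : ℝ) (hb : 0 < b) (q : ℝ × ℝ) (hq : q ∈ Icc (0:ℝ) 1 ×ˢ Icc (0:ℝ) 1) :
    0 ≤ 1 - (q.1 / 2) ^ 2 - (q.2 ^ b / 2) ^ 2 := by
  obtain ⟨⟨h1, h2⟩, h3, h4⟩ := hq
  have h5 := Real.rpow_nonneg h3 b
  have h6 := Real.rpow_le_one h3 h4 hb.le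
  nlinarith

lemma phiM_sphere (b : ℝ) (hb : 0 < b) (q : ℝ × ℝ) (hq : q ∈ Icc (0:ℝ) 1 ×ˢ Icc (0:ℝ) 1) :
    phiM b q ∈ Metric.sphere (0 : ℝ3) 1 := by
  have h := phiM_rad b hb q hq
  rw [mem_sphere_zero_iff_norm, EuclideanSpace.norm_eq, Real.sqrt_eq_one]
  simp only [Fin.sum_univ_three, phiM, Real.norm_eq_abs, sq_abs]
  simp [Real.sq_sqrt h]
  ring

lemma phiM_norm (b : ℝ) (hb : 0 < b) (k : ℕ) (p : ℝ) (q : ℝ × ℝ)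
    (hq : q ∈ Icc (0:ℝ) 1 ×ˢ Icc (0:ℝ) 1) :
    ‖highestWeight k (phiM b q)‖ ^ p =
      (k:ℝ) ^ (p / 4) * (1 - (q.2 ^ b / 2) ^ 2) ^ (k * (p / 2)) := by
  have h := phiM_rad b hb q hq
  have h' : 0 ≤ 1 - (q.2 ^ b / 2) ^ 2 := by nlinarith
  have h1 : ‖((phiM b q 0 : ℂ) + Complex.I * (phiM b q 1 : ℂ))‖
      = (1 - (q.2 ^ b / 2) ^ 2) ^ ((1:ℝ)/2) := by
    rw [mul_comm, Complex.norm_add_mul_I, ← Real.sqrt_eq_rpow]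
    congr 1
    simp only [phiM]
    simp [Real.sq_sqrt h]
    ring
  unfold highestWeight
  rw [norm_mul, norm_pow, h1, Complex.norm_real, Real.norm_of_nonneg (by positivity),
    Real.mul_rpow (by positivity) (by positivity), ← Real.rpow_mul (by positivity),
    ← Real.rpow_natCast, ← Real.rpow_mul h', ← Real.rpow_mul h']
  congr 2 <;> ring

lemma ball_aux (b : ℝ) (hb : 1 ≤ b) (c r : ℝ) (hr : 0 < r) :
    (volume.restrict (Icc (0:ℝ) 1)) {u | |u ^ b / 2 - c| < r} ≤
      ENNReal.ofReal ((4 * r) ^ (1 / b)) := by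
  have hb0 : 0 < b := by linarith
  have hm : MeasurableSet {u : ℝ | |u ^ b / 2 - c| < r} := by
    apply measurableSet_lt <;> fun_prop
  rw [Measure.restrict_apply hm]
  refine (Real.volume_le_diam _).trans ?_
  have key : ∀ u v : ℝ, 0 ≤ u → u ≤ v → |u ^ b / 2 - c| < r → |v ^ b / 2 - c| < r →
      v - u ≤ (4 * r) ^ (1 / b) := by
    intro u v hu huv h1 h2
    have h3 := Real.add_rpow_le_rpow_add hu (sub_nonneg.2 huv) hb
    rw [add_sub_cancel] at h3
    rw [abs_lt] at h1 h2
    have h4 : (v - u) ^ b ≤ 4 * r := by linarith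
    rw [one_div, Real.le_rpow_inv_iff_of_pos (sub_nonneg.2 huv) (by positivity) hb0]
    exact h4
  refine Metric.ediam_le fun u hu v hv => ?_
  rw [edist_dist]
  apply ENNReal.ofReal_le_ofReal
  rw [Real.dist_eq]
  rcases le_total u v with h | h
  · rw [abs_sub_comm, abs_of_nonneg (sub_nonneg.2 h)]
    exact key u v hu.2.1 h hu.1 hv.1
  · rw [abs_of_nonneg (sub_nonneg.2 h)]
    exact key v u hv.2.1 h hv.1 hu.1

lemma ball_aux1 (c r : ℝ) :
    (volume.restrict (Icc (0:ℝ) 1)) {u | |u / 2 - c| < r} ≤ ENNReal.ofReal (4 * r) := by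
  refine (Measure.restrict_apply_le _ _).trans ?_
  have : {u : ℝ | |u / 2 - c| < r} = Ioo (2 * c - 2 * r) (2 * c + 2 * r) := by
    ext u
    simp only [mem_ofPred_eq, abs_lt, mem_Ioo]
    constructor <;> rintro ⟨h1, h2⟩ <;> constructor <;> linarith
  rw [this, Real.volume_Ioo]
  apply ENNReal.ofReal_le_ofReal
  linarith

lemma ball_bound (α : ℝ) (h1 : 1 < α) (h2 : α < 2) (x : ℝ3) (r : ℝ) (hr : 0 < r) :
    (sqM.map (phiM (1 / (α - 1)))) (Metric.ball x r) ≤ ENNReal.ofReal (4 ^ α * r ^ α) := by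
  have hb : 1 ≤ 1 / (α - 1) := by rw [le_div_iff₀ (by linarith)]; linarith
  rw [Measure.map_apply (phiM_cont _ (by linarith)).measurable measurableSet_ball]
  have hsub : phiM (1 / (α - 1)) ⁻¹' Metric.ball x r ⊆
      {u : ℝ | |u / 2 - x 0| < r} ×ˢ {u : ℝ | |u ^ (1 / (α - 1)) / 2 - x 2| < r} := by
    intro q hq
    rw [mem_preimage, mem_ball, dist_eq_norm] at hq
    have a0 := PiLp.norm_apply_le (phiM (1 / (α - 1)) q - x) 0
    have a2 := PiLp.norm_apply_le (phiM (1 / (α - 1)) q - x) 2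
    refine ⟨lt_of_le_of_lt ?_ hq, lt_of_le_of_lt ?_ hq⟩
    · simpa [phiM] using a0
    · simpa [phiM] using a2
  refine (measure_mono hsub).trans ?_
  unfold sqM
  rw [Measure.prod_prod]
  refine (mul_le_mul' (ball_aux1 _ r) (ball_aux _ hb _ r hr)).trans ?_
  rw [← ENNReal.ofReal_mul (by positivity)]
  apply ENNReal.ofReal_le_ofReal
  rw [one_div_one_div, ← Real.mul_rpow (by norm_num) hr.le]
  apply le_of_eq
  conv_rhs => rw [show α = 1 + (α - 1) by ring, Real.rpow_add (by positivity), Real.rpow_one]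

lemma int_eq (b : ℝ) (hb : 0 < b) (k : ℕ) (p : ℝ) :
    ∫ x : ℝ3, ‖highestWeight k x‖ ^ p ∂(sqM.map (phiM b)) =
      (k:ℝ) ^ (p / 4) * ∫ u in Icc (0:ℝ) 1, (1 - (u ^ b / 2) ^ 2) ^ (k * (p / 2)) := by
  rw [integral_map (phiM_cont b hb).aemeasurable]
  · rw [sqM_eq, setIntegral_congr_fun (measurableSet_Icc.prod measurableSet_Icc)
      (fun q hq => phiM_norm b hb k p q hq), integral_const_mul]
    congr 1
    rw [← sqM_eq, sqM]
    rw [integral_fun_snd (fun u : ℝ => (1 - (u ^ b / 2) ^ 2) ^ (k * (p / 2)))]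
    simp
  · apply Measurable.aestronglyMeasurable
    unfold highestWeight
    fun_prop

lemma g_cont (b : ℝ) (hb : 0 < b) (s : ℝ) (hs : 0 ≤ s) :
    Continuous (fun u : ℝ => (1 - (u ^ b / 2) ^ 2) ^ s) := by
  have h : Continuous (fun q : ℝ => q ^ b) := Real.continuous_rpow_const hb.le
  exact (Real.continuous_rpow_const hs).comp (by fun_prop)

lemma g_nonneg (b : ℝ) (hb : 0 < b) (s : ℝ) (u : ℝ) (hu : u ∈ Icc (0:ℝ) 1) :
    0 ≤ (1 - (u ^ b / 2) ^ 2) ^ s := by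
  have h5 := Real.rpow_nonneg hu.1 b
  have h6 := Real.rpow_le_one hu.1 hu.2 hb.le
  apply Real.rpow_nonneg
  nlinarith

lemma lower (b : ℝ) (hb : 0 < b) (k : ℕ) (hk : 0 < k) (p : ℝ) (hp : 2 ≤ p) :
    (3 / 4 : ℝ) ^ (p / 2) * (k:ℝ) ^ (-(1 / (2 * b))) ≤
      ∫ u in Icc (0:ℝ) 1, (1 - (u ^ b / 2) ^ 2) ^ (k * (p / 2)) := by
  have hk1 : (1:ℝ) ≤ k := by exact_mod_cast hk
  have hk0 : (0:ℝ) < k := by linarith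
  set d := (k:ℝ) ^ (-(1 / (2 * b))) with hd
  have hd0 : 0 < d := by positivity
  have hd1 : d ≤ 1 := Real.rpow_le_one_of_one_le_of_nonpos hk1 (by
    rw [neg_nonpos]; positivity)
  have hs : 0 ≤ k * (p / 2) := by positivity
  have hint : ∀ c : ℝ, IntegrableOn (fun u : ℝ => (1 - (u ^ b / 2) ^ 2) ^ (k * (p / 2))) (Icc 0 c) :=
    fun c => (g_cont b hb _ hs).continuousOn.integrableOn_Icc
  calc (3 / 4 : ℝ) ^ (p / 2) * d = ∫ u in Icc (0:ℝ) d, (3 / 4 : ℝ) ^ (p / 2) := by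
        simp [hd0.le, mul_comm]
    _ ≤ ∫ u in Icc (0:ℝ) d, (1 - (u ^ b / 2) ^ 2) ^ (k * (p / 2)) := by
        refine setIntegral_mono_on (by simp) (hint d) measurableSet_Icc ?_
        intro u hu
        have e1 : (u ^ b) ^ 2 ≤ 1 / k := by
          have : u ^ b ≤ d ^ b := Real.rpow_le_rpow hu.1 hu.2 hb.le
          have e : (d ^ b) ^ 2 = 1 / k := by
            rw [hd, ← Real.rpow_mul hk0.le, ← Real.rpow_natCast, ← Real.rpow_mul hk0.le,
              show 1 / (k:ℝ) = (k:ℝ) ^ (-1:ℝ) by rw [Real.rpow_neg_one, one_div]]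
            congr 1
            field_simp
            norm_num
          rw [← e]
          exact pow_le_pow_left₀ (Real.rpow_nonneg hu.1 b) this 2
        have e2 : 1 / (k:ℝ) ≤ 1 := by rw [div_le_one hk0]; exact hk1
        have e3 : (0:ℝ) ≤ 1 - (u ^ b / 2) ^ 2 := by nlinarith
        rw [Real.rpow_mul e3]
        apply Real.rpow_le_rpow (by norm_num) _ (by positivity)
        rw [Real.rpow_natCast]
        have e4 := one_add_mul_le_pow (a := -(1 / (4 * (k:ℝ)))) (by
          have : 1 / (4 * (k:ℝ)) ≤ 1 := by rw [div_le_one (by positivity)]; linarith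
          linarith) k
        have e5 : 1 + (k:ℝ) * -(1 / (4 * (k:ℝ))) = 3 / 4 := by field_simp; norm_num
        rw [e5] at e4
        refine e4.trans (pow_le_pow_left₀ ?_ ?_ k)
        · have : 1 / (4 * (k:ℝ)) ≤ 1 := by rw [div_le_one (by positivity)]; linarith
          linarith
        · have : 1 / (4 * (k:ℝ)) = 1 / k / 4 := by field_simp
          rw [this]; nlinarith
    _ ≤ _ := by
        refine setIntegral_mono_set (hint 1) ?_ ?_
        · exact (ae_restrict_mem measurableSet_Icc).mono fun u hu => g_nonneg b hb _ u hu
        · exact (Icc_subset_Icc_right hd1).eventuallyLE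

lemma upper (b : ℝ) (hb : 0 < b) (k : ℕ) (hk : 0 < k) (p : ℝ) (hp : 2 ≤ p) :
    ∫ u in Icc (0:ℝ) 1, (1 - (u ^ b / 2) ^ 2) ^ (k * (p / 2)) ≤
      ((1 / 4 : ℝ) ^ (-(1 / (2 * b))) * Real.Gamma (1 / (2 * b) + 1)) *
        (k:ℝ) ^ (-(1 / (2 * b))) := by
  have hk1 : (1:ℝ) ≤ k := by exact_mod_cast hk
  have hk0 : (0:ℝ) < k := by linarith
  have hs : 0 ≤ k * (p / 2) := by positivity
  have hG := integral_exp_neg_mul_rpow (p := 2 * b) (b := 1 / 4 * (k:ℝ)) (by positivity) (by positivity)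
  rw [neg_div, Real.mul_rpow (by norm_num) hk0.le] at hG
  have hI : IntegrableOn (fun u : ℝ => Real.exp (-(1 / 4 * (k:ℝ)) * u ^ (2 * b))) (Ioi 0) := by
    by_contra h
    rw [integral_undef h] at hG
    have : 0 < Real.Gamma (1 / (2 * b) + 1) := Real.Gamma_pos_of_pos (by positivity)
    have : (0:ℝ) < (1 / 4 : ℝ) ^ (-(1 / (2 * b))) * (k:ℝ) ^ (-(1 / (2 * b))) * Real.Gamma (1 / (2 * b) + 1) := by
      positivity
    linarith
  rw [mul_right_comm, ← hG, integral_Icc_eq_integral_Ioc]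
  calc _ ≤ ∫ u in Ioc (0:ℝ) 1, Real.exp (-(1 / 4 * (k:ℝ)) * u ^ (2 * b)) := by
        refine setIntegral_mono_on ?_ (hI.mono_set Ioc_subset_Ioi_self) measurableSet_Ioc ?_
        · exact ((g_cont b hb _ hs).continuousOn.integrableOn_Icc (a := 0) (b := 1)).mono_set Ioc_subset_Icc_self
        intro u hu
        have h5 := Real.rpow_nonneg hu.1.le b
        have h6 := Real.rpow_le_one hu.1.le hu.2 hb.le
        have e3 : (0:ℝ) ≤ 1 - (u ^ b / 2) ^ 2 := by nlinarith
        have e4 : 1 - (u ^ b / 2) ^ 2 ≤ Real.exp (-(u ^ b / 2) ^ 2) := by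
          have := Real.add_one_le_exp (-(u ^ b / 2) ^ 2)
          linarith
        refine (Real.rpow_le_rpow e3 e4 hs).trans ?_
        rw [← Real.exp_mul, Real.exp_le_exp]
        have e5 : u ^ (2 * b) = (u ^ b) ^ 2 := by
          rw [mul_comm, Real.rpow_mul hu.1.le]; norm_num
        rw [e5]
        have : 0 ≤ (k:ℝ) * (u ^ b) ^ 2 := by positivity
        nlinarith
    _ ≤ _ := by
        refine setIntegral_mono_set hI ?_ Ioc_subset_Ioi_self.eventuallyLE
        exact Filter.Eventually.of_forall fun u => (Real.exp_pos _).le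

/-- Proposition 6.1 of the paper: for each `α ∈ (1,2)` there exist an
`α`-dimensional measure `μ` on `S²` and a subsequence `(k_n)` such that
`‖H_{k_n}‖_{L^p(dμ)} ≍ k_n^{1/4 - (α-1)/(2p)}` for all `p ≥ 2`. -/
theorem sharpness_fractal_measure :
    ∀ α : ℝ, 1 < α → α < 2 →
    ∃ (μ : Measure ℝ3) (Cμ : ℝ), IsFiniteMeasure μ ∧ 0 < Cμ ∧
      μ (Metric.sphere (0 : ℝ3) 1)ᶜ = 0 ∧
      (∀ x : ℝ3, ∀ r : ℝ, 0 < r → μ (Metric.ball x r) ≤ ENNReal.ofReal (Cμ * r ^ α)) ∧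
      ∃ kn : ℕ → ℕ, StrictMono kn ∧ (∀ n, 0 < kn n) ∧
        ∀ p : ℝ, 2 ≤ p →
          ∃ cp Cp : ℝ, 0 < cp ∧ cp ≤ Cp ∧
            ∀ n : ℕ,
              cp * (kn n : ℝ) ^ ((1 : ℝ) / 4 - (α - 1) / (2 * p)) ≤
                  (∫ x : ℝ3, ‖highestWeight (kn n) x‖ ^ p ∂μ) ^ (1 / p) ∧
                (∫ x : ℝ3, ‖highestWeight (kn n) x‖ ^ p ∂μ) ^ (1 / p) ≤
                  Cp * (kn n : ℝ) ^ ((1 : ℝ) / 4 - (α - 1) / (2 * p)) := by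
  intro α h1 h2
  have hα : 0 < α - 1 := by linarith
  have hb : 0 < 1 / (α - 1) := by positivity
  have hm := (phiM_cont _ hb).measurable
  refine ⟨sqM.map (phiM (1 / (α - 1))), 4 ^ α, Measure.isFiniteMeasure_map _ _, by positivity, ?_,
    fun x r hr => ball_bound α h1 h2 x r hr, fun n => n + 1, fun a b h => by simpa using h,
    fun n => by simp, ?_⟩
  · rw [Measure.map_apply hm Metric.isClosed_sphere.measurableSet.compl, sqM_eq,
      Measure.restrict_apply (hm Metric.isClosed_sphere.measurableSet.compl)]
    convert measure_empty (μ := (volume : Measure (ℝ × ℝ)))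
    ext q
    simp only [mem_inter_iff, mem_empty_iff_false, iff_false, not_and]
    exact fun h1 h2 => h1 (phiM_sphere _ hb q h2)
  intro p hp
  have hp0 : 0 < p := by linarith
  set A : ℝ := (3 / 4 : ℝ) ^ (p / 2) with hA
  set e : ℝ := 1 / (2 * (1 / (α - 1))) with he
  set B : ℝ := (1 / 4 : ℝ) ^ (-e) * Real.Gamma (e + 1) with hB
  have hA0 : 0 < A := by positivity
  have he0 : 0 < e := by positivity
  have hB0 : 0 < B := mul_pos (by positivity) (Real.Gamma_pos_of_pos (by positivity))
  have conv : ∀ (k : ℕ), 0 < k → ∀ C : ℝ, 0 < C →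
      C ^ (1 / p) * (k : ℝ) ^ ((1 : ℝ) / 4 - (α - 1) / (2 * p)) =
        ((k:ℝ) ^ (p / 4) * (C * (k:ℝ) ^ (-e))) ^ (1 / p) := by
    intro k hk C hC
    have hk0 : (0:ℝ) < k := by exact_mod_cast hk
    rw [mul_left_comm, ← Real.rpow_add hk0, Real.mul_rpow hC.le (by positivity),
      ← Real.rpow_mul hk0.le]
    congr 2
    rw [he]
    field_simp
    ring
  have main : ∀ n : ℕ, A ^ (1 / p) * ((n + 1 : ℕ) : ℝ) ^ ((1 : ℝ) / 4 - (α - 1) / (2 * p)) ≤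
        (∫ x : ℝ3, ‖highestWeight (n + 1) x‖ ^ p ∂(sqM.map (phiM (1 / (α - 1))))) ^ (1 / p) ∧
      (∫ x : ℝ3, ‖highestWeight (n + 1) x‖ ^ p ∂(sqM.map (phiM (1 / (α - 1))))) ^ (1 / p) ≤
        B ^ (1 / p) * ((n + 1 : ℕ) : ℝ) ^ ((1 : ℝ) / 4 - (α - 1) / (2 * p)) := by
    intro n
    have l := lower (1 / (α - 1)) hb (n + 1) n.succ_pos p hp
    have u := upper (1 / (α - 1)) hb (n + 1) n.succ_pos p hp
    rw [conv _ n.succ_pos A hA0, conv _ n.succ_pos B hB0, int_eq _ hb]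
    have l0 := (by positivity : (0:ℝ) ≤ (3 / 4 : ℝ) ^ (p / 2) * ((n + 1 : ℕ):ℝ) ^ (-(1 / (2 * (1 / (α - 1)))))).trans l
    constructor
    · exact Real.rpow_le_rpow (by positivity) (mul_le_mul_of_nonneg_left l (by positivity)) (by positivity)
    · exact Real.rpow_le_rpow (mul_nonneg (by positivity) l0) (mul_le_mul_of_nonneg_left u (by positivity)) (by positivity)
  refine ⟨A ^ (1 / p), B ^ (1 / p), by positivity, ?_, main⟩
  have := (main 0).1.trans (main 0).2
  simpa using this
end
end
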